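/- arXiv:1403.2852 — 2 statements merged into one kernel-verified Lean document; each statement's English description precedes it below -/
import Mathlib

section
/- Suppose g is non-decreasing, and let X be a weak solution of the dyadic model with initial condition x ∈ H that satisfies the energy inequality on [0,t] for every t<T. For n≥1 set F_n(t) = ∑_{i≥n} X_i(t)², d_n(t)² = F_n(t) + ∑_{i≥n+1} ∫_0^t (2k_i/g_i) X_i(s)² ds, and d̄_n = sup_{0≤t<T} d_n(t) (which is finite). Then for every n≥1, d̄_{n+2}² ≤ C_{n+2}(d̄_{n+1}) · d̄_n² + F_{n+2}(0), where C_m(v) = (1 + 1/((1/2) g_m ‖φ‖_{ℓ^∞} v))^{-1}. -/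
open scoped BigOperators ENNReal
open MeasureTheory Filter Set Topology

/-- `kₙ = 2^{βn}`. -/
noncomputable def kk (β : ℝ) (n : ℕ) : ℝ := (2 : ℝ) ^ (β * n)

/-- A weak solution of the dyadic model: `X 0 ≡ 0`, `X n 0 = x n`, and the ODE holds
for every `n ≥ 1` and `t ≥ 0` (the derivative being taken within `[0,∞)`). -/
def IsDyadicSolution (β : ℝ) (φ g : ℕ → ℝ) (x : ℕ → ℝ) (X : ℕ → ℝ → ℝ) : Prop :=
  (∀ t : ℝ, X 0 t = 0) ∧
  (∀ n : ℕ, 1 ≤ n → X n 0 = x n) ∧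
  (∀ n : ℕ, 1 ≤ n → ∀ t : ℝ, 0 ≤ t →
    HasDerivWithinAt (X n)
      (φ (n - 1) * kk β (n - 1) * (X (n - 1) t) ^ 2
        - φ n * kk β n * X n t * X (n + 1) t
        - kk β n / g n * X n t) (Set.Ici 0) t)

/-- The energy inequality at time `t`:
`∑_{n≥1} Xₙ(t)² + ∫_0^t ∑_{n≥1} (2kₙ/gₙ) Xₙ(s)² ds ≤ ∑_{n≥1} xₙ²`. -/
def EnergyIneqAt (β : ℝ) (g x : ℕ → ℝ) (X : ℕ → ℝ → ℝ) (t : ℝ) : Prop :=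
  (∑' n : ℕ, ENNReal.ofReal ((X (n + 1) t) ^ 2))
      + (∫⁻ s in Set.Ioc (0 : ℝ) t,
          ∑' n : ℕ, ENNReal.ofReal (2 * kk β (n + 1) / g (n + 1) * (X (n + 1) s) ^ 2))
    ≤ ∑' n : ℕ, ENNReal.ofReal ((x (n + 1)) ^ 2)

/-- `‖φ‖_{ℓ^∞} = sup_{n≥1} |φₙ|`. -/
noncomputable def phiNorm (φ : ℕ → ℝ) : ℝ := ⨆ n : ℕ, |φ (n + 1)|

/-- For `gₙ, Φ, v > 0` this is exactly `Cₙ(v) = (1 + 1/((1/2) gₙ Φ v))⁻¹`. -/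
noncomputable def Cfun (Φ : ℝ) (g : ℕ → ℝ) (n : ℕ) (v : ℝ) : ℝ :=
  (g n * Φ * v / 2) / (1 + g n * Φ * v / 2)

/-- `dₙ(t)² = Fₙ(t) + ∑_{i≥n+1} ∫_0^t (2kᵢ/gᵢ) Xᵢ(s)² ds`. -/
noncomputable def dSq (β : ℝ) (g : ℕ → ℝ) (X : ℕ → ℝ → ℝ) (n : ℕ) (t : ℝ) : ℝ :=
  (∑' i : ℕ, (X (n + i) t) ^ 2)
    + ∑' i : ℕ, ∫ s in Set.Ioc (0 : ℝ) t,
        2 * kk β (n + 1 + i) / g (n + 1 + i) * (X (n + 1 + i) s) ^ 2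

/-- The range of `t ↦ dₙ(t)` for `t ∈ [0,T)`. -/
noncomputable def dSet (β : ℝ) (g : ℕ → ℝ) (X : ℕ → ℝ → ℝ) (n : ℕ) (T : ℝ) : Set ℝ :=
  (fun t => Real.sqrt (dSq β g X n t)) '' Set.Ico 0 T

/-- `d̄ₙ = sup_{0 ≤ t < T} dₙ(t)`. -/
noncomputable def dBar (β : ℝ) (g : ℕ → ℝ) (X : ℕ → ℝ → ℝ) (n : ℕ) (T : ℝ) : ℝ :=
  sSup (dSet β g X n T)

/-!
Only the nonlinear transfer couples neighbouring modes: at each time the energy and dissipation of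
the modes `≥ n + 2` are at most their initial energy plus the energy `J` received from mode `n + 1`.
Since `|Xₙ₊₁| ≤ d̄ₙ₊₁` and `kₙ₊₁ gₙ₊₁ ≤ kₙ₊₂ gₙ₊₂`, AM-GM with weight `gₙ₊₂ / gₙ₊₁` bounds `J` by
`A` times the energy dissipated in modes `n + 1` and `n + 2`, where `A = gₙ₊₂ ‖φ‖ d̄ₙ₊₁ / 2`. These
two dissipations are part of the difference `dₙ² - dₙ₊₂²`, so
`dₙ₊₂² ≤ Fₙ₊₂(0) + A (dₙ² - dₙ₊₂²)`; solving for `dₙ₊₂²` yields the factor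
`A / (1 + A) = Cₙ₊₂(d̄ₙ₊₁)`.
-/

section OrderedField

variable {K : Type*} [Field K] [LinearOrder K] [IsStrictOrderedRing K]

lemma two_mul_mul_le_of_mul_le_mul {p q c d : K} (hp : 0 ≤ p) (hc : 0 < c) (hd : 0 < d)
    (h : p * c ≤ q * d) (a b : K) :
    2 * p * (a * b) ≤ d * (p / c * a ^ 2 + q / d * b ^ 2) := by
  have amgm : 2 * a * b ≤ d / c * a ^ 2 + (d / c)⁻¹ * b ^ 2 := two_mul_le_add_mul_sq (by positivity)
  have hq : p * (c / d) ≤ q := by rwa [← mul_div_assoc, div_le_iff₀ hd]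
  calc 2 * p * (a * b) = p * (2 * a * b) := by ring
    _ ≤ p * (d / c * a ^ 2 + (d / c)⁻¹ * b ^ 2) := by gcongr
    _ = p * (d / c) * a ^ 2 + p * (c / d) * b ^ 2 := by rw [inv_div]; ring
    _ ≤ p * (d / c) * a ^ 2 + q * b ^ 2 := by gcongr
    _ = d * (p / c * a ^ 2 + q / d * b ^ 2) := by field_simp

lemma le_div_one_add_mul_add {A D F y : K} (hA : 0 ≤ A) (hF : 0 ≤ F) (h : y ≤ F + A * (D - y)) :
    y ≤ A / (1 + A) * D + F := by
  have hy : y ≤ (A * D + F) / (1 + A) := by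
    rw [le_div_iff₀ (by positivity)]
    linarith
  have hF' : F / (1 + A) ≤ F := div_le_self hF (by linarith)
  calc y ≤ (A * D + F) / (1 + A) := hy
    _ = A / (1 + A) * D + F / (1 + A) := by ring
    _ ≤ A / (1 + A) * D + F := by gcongr

end OrderedField

lemma summable_of_tsum_ofReal_ne_top {ι : Type*} {a : ι → ℝ} (ha : ∀ i, 0 ≤ a i)
    (h : ∑' i, ENNReal.ofReal (a i) ≠ ∞) : Summable a := by
  simpa only [ENNReal.toReal_ofReal (ha _)] using ENNReal.summable_toReal h

lemma summable_and_tsum_add_tsum_le_of_ofReal {ι κ : Type*} {a : ι → ℝ} {b : κ → ℝ} {E : ℝ}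
    (ha : ∀ i, 0 ≤ a i) (hb : ∀ i, 0 ≤ b i) (hE : 0 ≤ E)
    (h : ∑' i, ENNReal.ofReal (a i) + ∑' i, ENNReal.ofReal (b i) ≤ ENNReal.ofReal E) :
    Summable a ∧ Summable b ∧ ∑' i, a i + ∑' i, b i ≤ E := by
  obtain ⟨ha_top, hb_top⟩ := ENNReal.add_ne_top.1 (ne_top_of_le_ne_top ENNReal.ofReal_ne_top h)
  have ha_sum := summable_of_tsum_ofReal_ne_top ha ha_top
  have hb_sum := summable_of_tsum_ofReal_ne_top hb hb_top
  refine ⟨ha_sum, hb_sum, ?_⟩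
  rwa [← ENNReal.ofReal_tsum_of_nonneg ha ha_sum, ← ENNReal.ofReal_tsum_of_nonneg hb hb_sum,
    ← ENNReal.ofReal_add (tsum_nonneg ha) (tsum_nonneg hb), ENNReal.ofReal_le_ofReal_iff hE] at h

lemma tsum_nat_add_eq_add_tsum {G : Type*} [AddCommGroup G] [TopologicalSpace G]
    [IsTopologicalAddGroup G] [T2Space G] {f : ℕ → G} (hf : Summable f) (n : ℕ) :
    ∑' i, f (n + i) = f n + ∑' i, f (n + 1 + i) := by
  have hfn : Summable fun i ↦ f (n + i) := by
    simpa only [add_comm n] using (summable_nat_add_iff n).2 hf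
  simpa only [add_zero, add_assoc, add_comm 1] using hfn.tsum_eq_zero_add

section Rates

lemma kk_pos (β : ℝ) (n : ℕ) : 0 < kk β n := by unfold kk; positivity

lemma kk_monotone {β : ℝ} (hβ : 0 ≤ β) : Monotone (kk β) := fun m n hmn ↦ by
  unfold kk
  gcongr
  norm_num

/-- The rate `(2kᵢ/gᵢ) Xᵢ(s)²` at which mode `i` dissipates energy. -/
noncomputable def dissipationRate (β : ℝ) (g : ℕ → ℝ) (X : ℕ → ℝ → ℝ) (i : ℕ) (s : ℝ) : ℝ :=
  2 * kk β i / g i * X i s ^ 2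

/-- The rate `2 φᵢ kᵢ Xᵢ(s)² Xᵢ₊₁(s)` at which mode `i` passes energy to mode `i + 1`. -/
noncomputable def transferRate (β : ℝ) (φ : ℕ → ℝ) (X : ℕ → ℝ → ℝ) (i : ℕ) (s : ℝ) : ℝ :=
  2 * φ i * kk β i * X i s ^ 2 * X (i + 1) s

/-- The energy dissipated by mode `i` during `[0, t]`. -/
noncomputable def dissipation (β : ℝ) (g : ℕ → ℝ) (X : ℕ → ℝ → ℝ) (i : ℕ) (t : ℝ) : ℝ :=
  ∫ s in Ioc 0 t, dissipationRate β g X i s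

/-- The energy passed from mode `i` to mode `i + 1` during `[0, t]`. -/
noncomputable def transfer (β : ℝ) (φ : ℕ → ℝ) (X : ℕ → ℝ → ℝ) (i : ℕ) (t : ℝ) : ℝ :=
  ∫ s in Ioc 0 t, transferRate β φ X i s

variable {β : ℝ} {φ g : ℕ → ℝ} {X : ℕ → ℝ → ℝ} {i : ℕ} {s t : ℝ}

lemma dissipationRate_nonneg (hg : 0 ≤ g i) (s : ℝ) : 0 ≤ dissipationRate β g X i s := by
  have := kk_pos β i
  unfold dissipationRate
  positivity

lemma dissipation_nonneg (hg : 0 ≤ g i) (t : ℝ) : 0 ≤ dissipation β g X i t :=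
  integral_nonneg (dissipationRate_nonneg hg)

lemma transferRate_le {Φ v : ℝ} (hφ : |φ i| ≤ Φ) (hv : |X i s| ≤ v) (hg : 0 < g i)
    (hg' : 0 < g (i + 1)) (hkg : kk β i * g i ≤ kk β (i + 1) * g (i + 1)) :
    transferRate β φ X i s ≤ g (i + 1) * Φ * v / 2 *
      (dissipationRate β g X i s + dissipationRate β g X (i + 1) s) := by
  have hk := kk_pos β i
  have hΦ : 0 ≤ Φ := (abs_nonneg _).trans hφ
  have hv₀ : 0 ≤ v := (abs_nonneg _).trans hv
  unfold transferRate dissipationRate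
  calc 2 * φ i * kk β i * X i s ^ 2 * X (i + 1) s
      ≤ |2 * φ i * kk β i * X i s ^ 2 * X (i + 1) s| := le_abs_self _
    _ = |φ i| * |X i s| * (2 * kk β i * (|X i s| * |X (i + 1) s|)) := by
        simp only [abs_mul, abs_pow, abs_of_pos hk, abs_two]
        ring
    _ ≤ Φ * v * (2 * kk β i * (|X i s| * |X (i + 1) s|)) := by gcongr
    _ ≤ Φ * v * (g (i + 1) *
          (kk β i / g i * |X i s| ^ 2 + kk β (i + 1) / g (i + 1) * |X (i + 1) s| ^ 2)) := by
        refine mul_le_mul_of_nonneg_left ?_ (by positivity)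
        exact two_mul_mul_le_of_mul_le_mul hk.le hg hg' hkg _ _
    _ = g (i + 1) * Φ * v / 2 *
          (2 * kk β i / g i * X i s ^ 2 + 2 * kk β (i + 1) / g (i + 1) * X (i + 1) s ^ 2) := by
        simp only [sq_abs]
        ring

end Rates

section EnergyInequality

variable {β : ℝ} {g x : ℕ → ℝ} {X : ℕ → ℝ → ℝ} {t : ℝ}

lemma EnergyIneqAt.tsum_ofReal_add_tsum_ofReal_le (h : EnergyIneqAt β g x X t)
    (hg : ∀ n, 1 ≤ n → 0 < g n) (hx : Summable fun n ↦ x (n + 1) ^ 2)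
    (hint : ∀ i, IntegrableOn (dissipationRate β g X i) (Ioc 0 t)) :
    ∑' i, ENNReal.ofReal (X (i + 1) t ^ 2) + ∑' i, ENNReal.ofReal (dissipation β g X (i + 1) t)
      ≤ ENNReal.ofReal (∑' i, x (i + 1) ^ 2) := by
  have hdiss (i : ℕ) : ENNReal.ofReal (dissipation β g X (i + 1) t)
      = ∫⁻ s in Ioc 0 t, ENNReal.ofReal (dissipationRate β g X (i + 1) s) :=
    ofReal_integral_eq_lintegral_ofReal (hint _)
      (ae_of_all _ (dissipationRate_nonneg (hg _ i.succ_pos).le))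
  rw [ENNReal.ofReal_tsum_of_nonneg (fun _ ↦ sq_nonneg _) hx, tsum_congr hdiss,
    ← lintegral_tsum fun i ↦ (hint _).aestronglyMeasurable.aemeasurable.ennreal_ofReal]
  exact h

/-- The energy of the modes, and the energy they dissipate during `[0, t]`, are finite. This is
what makes the real-valued sums in `dSq` meaningful. -/
structure HasFiniteEnergyAt (β : ℝ) (g : ℕ → ℝ) (X : ℕ → ℝ → ℝ) (t : ℝ) : Prop where
  summable_sq : Summable fun i ↦ X i t ^ 2
  summable_dissipation : Summable fun i ↦ dissipation β g X i t

lemma EnergyIneqAt.hasFiniteEnergyAt_and_dSq_zero_le (h : EnergyIneqAt β g x X t)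
    (hg : ∀ n, 1 ≤ n → 0 < g n) (hx : Summable fun n ↦ x (n + 1) ^ 2)
    (hint : ∀ i, IntegrableOn (dissipationRate β g X i) (Ioc 0 t)) (hX : X 0 t = 0) :
    HasFiniteEnergyAt β g X t ∧ dSq β g X 0 t ≤ ∑' i, x (i + 1) ^ 2 := by
  obtain ⟨hsq, hdiss, hle⟩ := summable_and_tsum_add_tsum_le_of_ofReal
    (fun _ ↦ sq_nonneg _) (fun i ↦ dissipation_nonneg (hg _ i.succ_pos).le t)
    (tsum_nonneg fun _ ↦ sq_nonneg _) (h.tsum_ofReal_add_tsum_ofReal_le hg hx hint)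
  have hsq' : Summable fun i ↦ X i t ^ 2 := (summable_nat_add_iff 1).1 hsq
  refine ⟨⟨hsq', (summable_nat_add_iff 1).1 hdiss⟩, ?_⟩
  calc dSq β g X 0 t = ∑' i, X (0 + i) t ^ 2 + ∑' i, dissipation β g X (0 + 1 + i) t := rfl
    _ = ∑' i, X (i + 1) t ^ 2 + ∑' i, dissipation β g X (i + 1) t := by
        simp only [zero_add, add_comm 1, hsq'.tsum_eq_zero_add, hX, zero_pow two_ne_zero]
    _ ≤ ∑' i, x (i + 1) ^ 2 := hle

lemma dSq_nonneg (hg : ∀ n, 1 ≤ n → 0 < g n) (n : ℕ) (t : ℝ) : 0 ≤ dSq β g X n t :=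
  add_nonneg (tsum_nonneg fun _ ↦ sq_nonneg _)
    (tsum_nonneg fun i ↦ dissipation_nonneg (hg _ (by omega)).le t)

namespace HasFiniteEnergyAt

lemma dSq_eq_add_dSq_succ (h : HasFiniteEnergyAt β g X t) (n : ℕ) :
    dSq β g X n t = X n t ^ 2 + dissipation β g X (n + 1) t + dSq β g X (n + 1) t := by
  have hsq := tsum_nat_add_eq_add_tsum h.summable_sq n
  have hdiss := tsum_nat_add_eq_add_tsum h.summable_dissipation (n + 1)
  calc dSq β g X n t = ∑' i, X (n + i) t ^ 2 + ∑' i, dissipation β g X (n + 1 + i) t := rfl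
    _ = X n t ^ 2 + dissipation β g X (n + 1) t
          + (∑' i, X (n + 1 + i) t ^ 2 + ∑' i, dissipation β g X (n + 1 + 1 + i) t) := by
        rw [hsq, hdiss]
        ring

lemma sq_le_dSq (h : HasFiniteEnergyAt β g X t) (hg : ∀ n, 1 ≤ n → 0 < g n) (n : ℕ) :
    X n t ^ 2 ≤ dSq β g X n t := by
  linarith [h.dSq_eq_add_dSq_succ n, dSq_nonneg (β := β) (X := X) hg (n + 1) t,
    dissipation_nonneg (β := β) (X := X) (hg (n + 1) n.succ_pos).le t]

lemma antitone_dSq (h : HasFiniteEnergyAt β g X t) (hg : ∀ n, 1 ≤ n → 0 < g n) :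
    Antitone fun n ↦ dSq β g X n t :=
  antitone_nat_of_succ_le fun n ↦ by
    linarith [h.dSq_eq_add_dSq_succ n, sq_nonneg (X n t),
      dissipation_nonneg (β := β) (X := X) (hg (n + 1) n.succ_pos).le t]

end HasFiniteEnergyAt

end EnergyInequality

namespace IsDyadicSolution

variable {β : ℝ} {φ g x : ℕ → ℝ} {X : ℕ → ℝ → ℝ} {t : ℝ}

lemma continuousOn (hsol : IsDyadicSolution β φ g x X) (i : ℕ) : ContinuousOn (X i) (Ici 0) := by
  rcases i.eq_zero_or_pos with rfl | hi
  · exact continuousOn_const.congr fun t _ ↦ hsol.1 t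
  · exact fun t ht ↦ (hsol.2.2 i hi t ht).continuousWithinAt

lemma integrableOn_dissipationRate (hsol : IsDyadicSolution β φ g x X) (i : ℕ) (t : ℝ) :
    IntegrableOn (dissipationRate β g X i) (Ioc 0 t) := by
  have hX := (hsol.continuousOn i).mono (Icc_subset_Ici_self : Icc 0 t ⊆ Ici 0)
  have hcont : ContinuousOn (dissipationRate β g X i) (Icc 0 t) := by
    unfold dissipationRate
    fun_prop
  exact hcont.integrableOn_Icc.mono_set Ioc_subset_Icc_self

lemma integrableOn_transferRate (hsol : IsDyadicSolution β φ g x X) (i : ℕ) (t : ℝ) :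
    IntegrableOn (transferRate β φ X i) (Ioc 0 t) := by
  have hX (j : ℕ) := (hsol.continuousOn j).mono (Icc_subset_Ici_self : Icc 0 t ⊆ Ici 0)
  have hcont : ContinuousOn (transferRate β φ X i) (Icc 0 t) := by
    unfold transferRate
    fun_prop
  exact hcont.integrableOn_Icc.mono_set Ioc_subset_Icc_self

lemma hasDerivAt_sq (hsol : IsDyadicSolution β φ g x X) (i : ℕ) (ht : 0 < t) :
    HasDerivAt (fun s ↦ X (i + 1) s ^ 2)
      (transferRate β φ X i t - transferRate β φ X (i + 1) t - dissipationRate β g X (i + 1) t)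
      t := by
  have hX := (hsol.2.2 (i + 1) i.succ_pos t ht.le).hasDerivAt (Ici_mem_nhds ht)
  refine (hX.pow 2).congr_deriv ?_
  simp only [Nat.add_sub_cancel, transferRate, dissipationRate]
  push_cast
  ring

lemma sq_add_dissipation (hsol : IsDyadicSolution β φ g x X) (i : ℕ) (ht : 0 ≤ t) :
    X (i + 1) t ^ 2 + dissipation β g X (i + 1) t
      = x (i + 1) ^ 2 + transfer β φ X i t - transfer β φ X (i + 1) t := by
  have hJ := hsol.integrableOn_transferRate i t
  have hJ' := hsol.integrableOn_transferRate (i + 1) t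
  have hI := hsol.integrableOn_dissipationRate (i + 1) t
  have hJJ' : IntegrableOn (fun s ↦ transferRate β φ X i s - transferRate β φ X (i + 1) s)
      (Ioc 0 t) := hJ.sub hJ'
  have hcont : ContinuousOn (fun s ↦ X (i + 1) s ^ 2) (Icc 0 t) :=
    ((hsol.continuousOn (i + 1)).mono Icc_subset_Ici_self).pow 2
  have ftc := intervalIntegral.integral_eq_sub_of_hasDerivAt_of_le ht hcont
    (fun s hs ↦ hsol.hasDerivAt_sq i hs.1)
    ((intervalIntegrable_iff_integrableOn_Ioc_of_le ht).2 (hJJ'.sub hI))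
  rw [intervalIntegral.integral_of_le ht, integral_sub hJJ' hI,
    integral_sub hJ hJ', hsol.2.1 (i + 1) i.succ_pos] at ftc
  unfold dissipation transfer
  linarith

lemma transfer_zero (hsol : IsDyadicSolution β φ g x X) (t : ℝ) : transfer β φ X 0 t = 0 := by
  simp [transfer, transferRate, hsol.1]

lemma dSq_succ_add_dissipation_le (hsol : IsDyadicSolution β φ g x X)
    (hx : Summable fun n ↦ x (n + 1) ^ 2) (ht : 0 ≤ t) (hfin : HasFiniteEnergyAt β g X t)
    (hle : dSq β g X 0 t ≤ ∑' i, x (i + 1) ^ 2) (m : ℕ) :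
    dSq β g X (m + 1) t + dissipation β g X (m + 1) t
      ≤ ∑' i, x (m + 1 + i) ^ 2 + transfer β φ X m t := by
  induction m with
  | zero =>
    have hd := hfin.dSq_eq_add_dSq_succ 0
    simp only [zero_add, add_comm 1, hsol.transfer_zero, hsol.1] at hd ⊢
    linarith
  | succ m ih =>
    have hbal := hsol.sq_add_dissipation m ht
    have hd := hfin.dSq_eq_add_dSq_succ (m + 1)
    have hx' : Summable fun n ↦ x n ^ 2 := (summable_nat_add_iff 1).1 hx
    have hF := tsum_nat_add_eq_add_tsum hx' (m + 1)
    linarith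

lemma transfer_le (hsol : IsDyadicSolution β φ g x X) {i : ℕ} {Φ v : ℝ} (hφ : |φ i| ≤ Φ)
    (hv : ∀ s ∈ Ioc 0 t, |X i s| ≤ v) (hg : 0 < g i) (hg' : 0 < g (i + 1))
    (hkg : kk β i * g i ≤ kk β (i + 1) * g (i + 1)) :
    transfer β φ X i t ≤ g (i + 1) * Φ * v / 2 *
      (dissipation β g X i t + dissipation β g X (i + 1) t) := by
  have hI (j : ℕ) := hsol.integrableOn_dissipationRate j t
  unfold transfer dissipation
  rw [← integral_add (hI i) (hI (i + 1)), ← integral_const_mul]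
  exact setIntegral_mono_on (hsol.integrableOn_transferRate i t)
    (((hI i).add (hI (i + 1))).const_mul _) measurableSet_Ioc
    fun s hs ↦ transferRate_le hφ (hv s hs) hg hg' hkg

lemma dSq_add_two_le (hsol : IsDyadicSolution β φ g x X) (hg : ∀ n, 1 ≤ n → 0 < g n)
    (hx : Summable fun n ↦ x (n + 1) ^ 2) (ht : 0 ≤ t) (hfin : HasFiniteEnergyAt β g X t)
    (hle : dSq β g X 0 t ≤ ∑' i, x (i + 1) ^ 2) {n : ℕ} {Φ v : ℝ} (hφ : |φ (n + 1)| ≤ Φ)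
    (hv₀ : 0 ≤ v) (hv : ∀ s ∈ Ioc 0 t, |X (n + 1) s| ≤ v)
    (hkg : kk β (n + 1) * g (n + 1) ≤ kk β (n + 2) * g (n + 2)) :
    dSq β g X (n + 2) t ≤ Cfun Φ g (n + 2) v * dSq β g X n t + ∑' i, x (n + 2 + i) ^ 2 := by
  have hg₁ := hg (n + 1) (by omega)
  have hg₂ := hg (n + 2) (by omega)
  have hΦ : 0 ≤ Φ := (abs_nonneg _).trans hφ
  have hA : 0 ≤ g (n + 2) * Φ * v / 2 := by positivity
  have htransfer := hsol.transfer_le hφ hv hg₁ hg₂ hkg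
  have hgap : dissipation β g X (n + 1) t + dissipation β g X (n + 2) t
      ≤ dSq β g X n t - dSq β g X (n + 2) t := by
    linarith [hfin.dSq_eq_add_dSq_succ n, hfin.dSq_eq_add_dSq_succ (n + 1), sq_nonneg (X n t),
      sq_nonneg (X (n + 1) t)]
  refine le_div_one_add_mul_add hA (tsum_nonneg fun _ ↦ sq_nonneg _) ?_
  calc dSq β g X (n + 2) t
      ≤ ∑' i, x (n + 2 + i) ^ 2 + transfer β φ X (n + 1) t := by
        linarith [hsol.dSq_succ_add_dissipation_le hx ht hfin hle (n + 1),
          dissipation_nonneg (β := β) (X := X) hg₂.le t]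
    _ ≤ ∑' i, x (n + 2 + i) ^ 2
          + g (n + 2) * Φ * v / 2 * (dSq β g X n t - dSq β g X (n + 2) t) := by
        gcongr
        exact htransfer.trans (mul_le_mul_of_nonneg_left hgap hA)

end IsDyadicSolution

section DBar

variable {β : ℝ} {g : ℕ → ℝ} {X : ℕ → ℝ → ℝ} {n : ℕ} {t T : ℝ}

lemma bddAbove_dSet_of_dSq_le {E : ℝ} (h : ∀ t ∈ Ico 0 T, dSq β g X n t ≤ E) :
    BddAbove (dSet β g X n T) :=
  ⟨√E, forall_mem_image.2 fun t ht ↦ Real.sqrt_le_sqrt (h t ht)⟩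

lemma dBar_nonneg : 0 ≤ dBar β g X n T :=
  Real.sSup_nonneg (forall_mem_image.2 fun _ _ ↦ Real.sqrt_nonneg _)

lemma dSq_le_dBar_sq (hbdd : BddAbove (dSet β g X n T)) (ht : t ∈ Ico 0 T) :
    dSq β g X n t ≤ dBar β g X n T ^ 2 :=
  (Real.sqrt_le_iff.1 (le_csSup hbdd (mem_image_of_mem _ ht))).2

lemma dBar_sq_le (hg : ∀ n, 1 ≤ n → 0 < g n) (hT : 0 < T) {R : ℝ}
    (h : ∀ t ∈ Ico 0 T, dSq β g X n t ≤ R) : dBar β g X n T ^ 2 ≤ R := by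
  have h₀ : (0 : ℝ) ∈ Ico 0 T := left_mem_Ico.2 hT
  have hR : 0 ≤ R := (dSq_nonneg hg n 0).trans (h 0 h₀)
  exact (Real.le_sqrt dBar_nonneg hR).1 <| csSup_le ⟨_, mem_image_of_mem _ h₀⟩
    (forall_mem_image.2 fun t ht ↦ Real.sqrt_le_sqrt (h t ht))

end DBar

lemma Cfun_nonneg {Φ v : ℝ} {g : ℕ → ℝ} {n : ℕ} (hg : 0 ≤ g n) (hΦ : 0 ≤ Φ) (hv : 0 ≤ v) :
    0 ≤ Cfun Φ g n v := by
  unfold Cfun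
  positivity

theorem dyadic_dbar_recursive_bound_general
    (β : ℝ) (φ g : ℕ → ℝ)
    (hφbdd : BddAbove (Set.range fun n : ℕ => |φ (n + 1)|))
    (hgpos : ∀ n : ℕ, 1 ≤ n → 0 < g n)
    (T : ℝ) (hT : 0 < T)
    (x : ℕ → ℝ) (hxH : Summable fun n : ℕ => (x (n + 1)) ^ 2)
    (X : ℕ → ℝ → ℝ) (hsol : IsDyadicSolution β φ g x X)
    (hEI : ∀ t : ℝ, 0 ≤ t → t < T → EnergyIneqAt β g x X t) :
    (∀ n : ℕ, BddAbove (dSet β g X n T)) ∧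
    (∀ n : ℕ, kk β (n + 1) * g (n + 1) ≤ kk β (n + 2) * g (n + 2) →
      (dBar β g X (n + 2) T) ^ 2
        ≤ Cfun (phiNorm φ) g (n + 2) (dBar β g X (n + 1) T) * (dBar β g X n T) ^ 2
          + ∑' i : ℕ, (x (n + 2 + i)) ^ 2) := by
  have henergy (t : ℝ) (ht : t ∈ Ico 0 T) :=
    (hEI t ht.1 ht.2).hasFiniteEnergyAt_and_dSq_zero_le hgpos hxH
      (fun i ↦ hsol.integrableOn_dissipationRate i t) (hsol.1 t)
  have hbdd (n : ℕ) : BddAbove (dSet β g X n T) := bddAbove_dSet_of_dSq_le fun t ht ↦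
    ((henergy t ht).1.antitone_dSq hgpos n.zero_le).trans (henergy t ht).2
  refine ⟨hbdd, fun n hkg ↦ dBar_sq_le hgpos hT fun t ht ↦ ?_⟩
  have hφ : |φ (n + 1)| ≤ phiNorm φ := le_ciSup hφbdd n
  have hC := Cfun_nonneg (hgpos (n + 2) (by omega)).le ((abs_nonneg _).trans hφ)
    (dBar_nonneg (β := β) (g := g) (X := X) (n := n + 1) (T := T))
  have hX (s : ℝ) (hs : s ∈ Ioc 0 t) : |X (n + 1) s| ≤ dBar β g X (n + 1) T :=
    have hsT : s ∈ Ico 0 T := ⟨hs.1.le, hs.2.trans_lt ht.2⟩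
    abs_le_of_sq_le_sq (((henergy s hsT).1.sq_le_dSq hgpos _).trans (dSq_le_dBar_sq (hbdd _) hsT))
      dBar_nonneg
  exact (hsol.dSq_add_two_le hgpos hxH ht.1 (henergy t ht).1 (henergy t ht).2 hφ dBar_nonneg hX
    hkg).trans (by gcongr; exact dSq_le_dBar_sq (hbdd n) ht)

/-- The key recursive estimate (3.4): `d̄ₙ` is finite and
`d̄_{n+2}² ≤ C_{n+2}(d̄_{n+1}) d̄ₙ² + F_{n+2}(0)`. -/
theorem dyadic_dbar_recursive_bound
    (β : ℝ) (hβ : 0 < β) (φ g : ℕ → ℝ)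
    (hφbdd : BddAbove (Set.range fun n : ℕ => |φ (n + 1)|))
    (hgpos : ∀ n : ℕ, 1 ≤ n → 0 < g n)
    (hgmono : ∀ n m : ℕ, 1 ≤ n → n ≤ m → g n ≤ g m)
    (T : ℝ) (hT : 0 < T)
    (x : ℕ → ℝ) (hxH : Summable fun n : ℕ => (x (n + 1)) ^ 2)
    (X : ℕ → ℝ → ℝ) (hsol : IsDyadicSolution β φ g x X)
    (hEI : ∀ t : ℝ, 0 ≤ t → t < T → EnergyIneqAt β g x X t) :
    (∀ n : ℕ, 1 ≤ n → BddAbove (dSet β g X n T)) ∧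
    (∀ n : ℕ, 1 ≤ n →
      (dBar β g X (n + 2) T) ^ 2
        ≤ Cfun (phiNorm φ) g (n + 2) (dBar β g X (n + 1) T) * (dBar β g X n T) ^ 2
          + ∑' i : ℕ, (x (n + 2 + i)) ^ 2) := by
  obtain ⟨hbdd, hrec⟩ := dyadic_dbar_recursive_bound_general β φ g hφbdd hgpos T hT x hxH X hsol hEI
  exact ⟨fun n _ ↦ hbdd n, fun n _ ↦ hrec n (mul_le_mul (kk_monotone hβ.le (n + 1).le_succ)
    (hgmono _ _ (by omega) (n + 1).le_succ) (hgpos _ (by omega)).le (kk_pos β _).le)⟩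
end

section
/- Let x ∈ H^s for some s>0 and let y be the bounding sequence for x. Suppose that g_n is non-decreasing, that g_n 2^{-sn} is eventually non-increasing, and that ∑_{n≥1} g_n^{-1} = ∞. Then ∑_{n≥1} 2^{2sn} y_n < ∞. -/
open scoped BigOperators ENNReal
open MeasureTheory Filter Set Topology

/-- `x ∈ Hˢ`, i.e. `∑_{n≥1} 2^{2sn} xₙ² < ∞`. -/
def MemHs (s : ℝ) (x : ℕ → ℝ) : Prop :=
  Summable (fun n : ℕ => (2 : ℝ) ^ (2 * s * ((n : ℝ) + 1)) * (x (n + 1)) ^ 2)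

/-- `∑_{i ≥ n} xᵢ²`. -/
noncomputable def tail2 (x : ℕ → ℝ) (n : ℕ) : ℝ := ∑' i : ℕ, (x (n + i)) ^ 2

/-- The bounding sequence for `x`: `y₁ = y₂ = 2‖x‖_H²` and
`y_{n+2} = C_{n+2}(√y_{n+1}) yₙ + ∑_{i ≥ n+2} xᵢ²`. -/
noncomputable def boundSeq (Φ : ℝ) (g x : ℕ → ℝ) : ℕ → ℝ
  | 0 => 0
  | 1 => 2 * tail2 x 1
  | 2 => 2 * tail2 x 1
  | n + 3 =>
      Cfun Φ g (n + 3) (Real.sqrt (boundSeq Φ g x (n + 2))) * boundSeq Φ g x (n + 1)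
        + tail2 x (n + 3)

/-!
Put `θ t = t / (1 + t)` and `b n = √(y n)`. Up to reindexing, the recursion reads
`b (n + 2) ^ 2 ≤ θ (a n * b (n + 1)) * b n ^ 2 + τ n ^ 2`, where `a` is a multiple of `g` and `τ` is
the square root of a tail of `∑ xᵢ²`. The pairs `m k = max (b (2 * k)) (b (2 * k + 1))` then satisfy
a one-step recursion with damping factor `θ (w k)`, where `w k = A k * (m k + τ (2 * k))` and
`A k = a (2 * k + 1)`. Taking square roots, each step lowers `m` by at least `θ (w k) / (2 * A k)`,
up to the summable error `2 * τ (2 * k)`. Hence `∑ θ (w k) / A k < ∞`, and since `∑ 1 / A k = ∞`,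
`w` comes arbitrarily close to `0`. Since `A` grows at most geometrically, a small `w k` forces a
small `w (k + 1)`, so `w` tends to `0`. All the damping factors therefore tend to `0`, and `y`
decays as fast as the forcing allows.
-/

section Sequences

lemma eventually_of_frequently_of_imp_succ {p : ℕ → Prop} (hp : ∃ᶠ n in atTop, p n)
    (hstep : ∀ᶠ n in atTop, p n → p (n + 1)) : ∀ᶠ n in atTop, p n := by
  obtain ⟨N, hN⟩ := eventually_atTop.1 hstep
  obtain ⟨n₀, hn₀, hpn₀⟩ := frequently_atTop.1 hp N
  filter_upwards [eventually_ge_atTop n₀] with n hn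
  induction n, hn using Nat.le_induction with
  | base => exact hpn₀
  | succ n hn ih => exact hN n (hn₀.trans hn) ih

lemma summable_of_add_le_add {m d e : ℕ → ℝ} (hm : ∀ n, 0 ≤ m n) (hd : ∀ n, 0 ≤ d n)
    (he : ∀ n, 0 ≤ e n) (hes : Summable e) (h : ∀ n, m (n + 1) + d n ≤ m n + e n) :
    Summable d := by
  have hsum : ∀ n, m n + ∑ i ∈ Finset.range n, d i ≤ m 0 + ∑ i ∈ Finset.range n, e i := by
    intro n
    induction n with
    | zero => simp
    | succ n ih =>
      rw [Finset.sum_range_succ, Finset.sum_range_succ]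
      linarith [h n]
  refine summable_of_sum_range_le (c := m 0 + ∑' i, e i) hd fun n => ?_
  linarith [hsum n, hm n, hes.sum_le_tsum (Finset.range n) fun i _ => he i]

lemma summable_of_add_le_mul_add {z t : ℕ → ℝ} {c : ℝ} {p : ℕ} (hc : c < 1) (hz : ∀ n, 0 ≤ z n)
    (ht : ∀ n, 0 ≤ t n) (hts : Summable t) (h : ∀ n, z (n + p) ≤ c * z n + t n) :
    Summable z := by
  refine summable_of_sum_range_le
    (c := (∑ i ∈ Finset.range p, z i + ∑' i, t i) / (1 - c)) hz fun n => ?_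
  have hsum_le : ∑ i ∈ Finset.range n, z i ≤
      ∑ i ∈ Finset.range p, z i + (c * ∑ i ∈ Finset.range n, z i + ∑' i, t i) :=
    calc ∑ i ∈ Finset.range n, z i
        ≤ ∑ i ∈ Finset.range (p + n), z i :=
          Finset.sum_le_sum_of_subset_of_nonneg (Finset.range_mono (Nat.le_add_left n p))
            fun i _ _ => hz i
      _ = ∑ i ∈ Finset.range p, z i + ∑ i ∈ Finset.range n, z (i + p) := by
          rw [Finset.sum_range_add]
          simp only [add_comm p]
      _ ≤ ∑ i ∈ Finset.range p, z i + ∑ i ∈ Finset.range n, (c * z i + t i) := by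
          gcongr with i
          exact h i
      _ ≤ ∑ i ∈ Finset.range p, z i + (c * ∑ i ∈ Finset.range n, z i + ∑' i, t i) := by
          rw [Finset.sum_add_distrib, ← Finset.mul_sum]
          gcongr
          exact hts.sum_le_tsum _ fun i _ => ht i
  rw [le_div_iff₀ (sub_pos.2 hc)]
  linarith

lemma summable_pow_mul_of_tendsto_zero {y c T : ℕ → ℝ} {q : ℝ} {p : ℕ} (hq : 0 < q)
    (hy : ∀ n, 0 ≤ y n) (hT : ∀ n, 0 ≤ T n) (hTs : Summable fun n => q ^ n * T n)
    (hc : Tendsto c atTop (𝓝 0)) (h : ∀ n, y (n + p) ≤ c n * y n + T n) :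
    Summable fun n => q ^ n * y n := by
  have hqc : ∀ᶠ n in atTop, q ^ p * c n < 1 / 2 := by
    have := hc.const_mul (q ^ p)
    rw [mul_zero] at this
    exact this.eventually_lt_const one_half_pos
  obtain ⟨N, hN⟩ := eventually_atTop.1 hqc
  rw [← summable_nat_add_iff N]
  refine summable_of_add_le_mul_add (p := p) (t := fun n => q ^ p * (q ^ (n + N) * T (n + N)))
    one_half_lt_one (fun n => mul_nonneg (by positivity) (hy _))
    (fun n => mul_nonneg (by positivity) (mul_nonneg (by positivity) (hT _)))
    (((summable_nat_add_iff N).2 hTs).mul_left _) fun n => ?_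
  have hz : 0 ≤ q ^ (n + N) * y (n + N) := mul_nonneg (by positivity) (hy _)
  calc q ^ (n + p + N) * y (n + p + N)
      ≤ q ^ (n + p + N) * (c (n + N) * y (n + N) + T (n + N)) := by
        rw [add_right_comm n p N]
        gcongr
        exact h _
    _ = q ^ p * c (n + N) * (q ^ (n + N) * y (n + N)) + q ^ p * (q ^ (n + N) * T (n + N)) := by
        ring
    _ ≤ 1 / 2 * (q ^ (n + N) * y (n + N)) + q ^ p * (q ^ (n + N) * T (n + N)) := by
        gcongr
        exact (hN _ (Nat.le_add_left N n)).le

lemma isBigO_pow_of_eventually_le_mul {a : ℕ → ℝ} {R : ℝ} (hR : 0 < R) (ha : ∀ n, 0 ≤ a n)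
    (h : ∀ᶠ n in atTop, a (n + 1) ≤ R * a n) : a =O[atTop] fun n => R ^ n := by
  obtain ⟨N, hN⟩ := eventually_atTop.1 h
  refine Asymptotics.IsBigO.of_bound (a N / R ^ N) ?_
  filter_upwards [eventually_ge_atTop N] with n hn
  obtain ⟨k, rfl⟩ := Nat.exists_eq_add_of_le hn
  rw [Real.norm_of_nonneg (ha _), Real.norm_of_nonneg (by positivity)]
  calc a (N + k) ≤ R ^ k * a N :=
        le_geom (u := fun k => a (N + k)) hR.le k fun i _ => hN (N + i) (Nat.le_add_right N i)
    _ = a N / R ^ N * R ^ (N + k) := by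
        rw [pow_add]
        field_simp

lemma summable_inv_of_summable_inv_odd {a : ℕ → ℝ} (ha : ∀ n, 0 < a n) (hmono : Monotone a)
    (h : Summable fun k => (a (2 * k + 1))⁻¹) : Summable fun n => (a n)⁻¹ := by
  have hanti : Antitone fun n => (a n)⁻¹ := fun i j hij => inv_anti₀ (ha i) (hmono hij)
  exact (summable_indicator_mod_iff hanti _).1
    ((summable_indicator_mod_iff_summable 2 1 fun n => (a n)⁻¹).2 h)

lemma summable_of_summable_pow_mul {f : ℕ → ℝ} {q : ℝ} (hq : 1 ≤ q) (hf : ∀ n, 0 ≤ f n)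
    (h : Summable fun n => q ^ n * f n) : Summable f :=
  h.of_nonneg_of_le hf fun n => le_mul_of_one_le_left (hf n) (one_le_pow₀ hq)

lemma summable_pow_mul_tsum_add {f : ℕ → ℝ} {q : ℝ} (hq : 1 < q) (hf : ∀ n, 0 ≤ f n)
    (h : Summable fun n => q ^ n * f n) : Summable fun n => q ^ n * ∑' i, f (n + i) := by
  have hq₀ : 0 < q := one_pos.trans hq
  have hgeom : Summable fun i : ℕ => q⁻¹ ^ i :=
    summable_geometric_of_lt_one (inv_nonneg.2 hq₀.le) (inv_lt_one_of_one_lt₀ hq)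
  have hprod : Summable fun p : ℕ × ℕ => q⁻¹ ^ p.1 * (q ^ p.2 * f p.2) :=
    hgeom.mul_of_nonneg h (fun i => by positivity) fun n => mul_nonneg (by positivity) (hf n)
  have hinj : Function.Injective fun p : ℕ × ℕ => (p.2, p.1 + p.2) := by
    rintro ⟨n, i⟩ ⟨n', i'⟩ hp
    simp only [Prod.mk.injEq] at hp ⊢
    omega
  refine (hprod.comp_injective hinj).prod.congr fun n => ?_
  rw [← tsum_mul_left]
  refine tsum_congr fun i => ?_
  simp only [Function.comp_apply, pow_add, inv_pow]
  field_simp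

end Sequences

section Sqrt

variable {T : ℕ → ℝ} {R : ℝ}

lemma tendsto_pow_mul_sqrt_zero (hR : 0 ≤ R) (hTs : Summable fun n => (R ^ 2) ^ n * T n) :
    Tendsto (fun n => R ^ n * √(T n)) atTop (𝓝 0) := by
  have hsqrt := hTs.tendsto_atTop_zero.sqrt
  rw [Real.sqrt_zero] at hsqrt
  refine hsqrt.congr fun n => ?_
  rw [Real.sqrt_mul (by positivity), pow_right_comm, Real.sqrt_sq (by positivity)]

lemma summable_sqrt_of_summable_pow_mul (hR : 1 < R) (hT : ∀ n, 0 ≤ T n)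
    (hTs : Summable fun n => (R ^ 2) ^ n * T n) : Summable fun n => √(T n) := by
  have hR₀ : 0 < R := one_pos.trans hR
  have hgeom : Summable fun n : ℕ => (R⁻¹ ^ 2) ^ n :=
    summable_geometric_of_lt_one (by positivity)
      (pow_lt_one₀ (by positivity) (inv_lt_one_of_one_lt₀ hR) two_ne_zero)
  refine (hgeom.add hTs).of_nonneg_of_le (fun n => Real.sqrt_nonneg _) fun n => ?_
  have hcancel : R⁻¹ ^ n * R ^ n = 1 := by rw [← mul_pow, inv_mul_cancel₀ hR₀.ne', one_pow]
  calc √(T n) ≤ 2 * (R⁻¹ ^ n) * (R ^ n * √(T n)) := by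
        rw [mul_assoc 2, ← mul_assoc (R⁻¹ ^ n), hcancel]
        linarith [Real.sqrt_nonneg (T n)]
    _ ≤ (R⁻¹ ^ n) ^ 2 + (R ^ n * √(T n)) ^ 2 := two_mul_le_add_sq _ _
    _ = (R⁻¹ ^ 2) ^ n + (R ^ 2) ^ n * T n := by
        rw [mul_pow, Real.sq_sqrt (hT n), pow_right_comm, pow_right_comm R]

end Sqrt

/-- The function `θ t = t / (1 + t)`, for which the paper's `Cₙ(v)` is `θ (gₙ ‖φ‖ v / 2)`; it is
only used at `t ≥ 0`. -/
noncomputable def damping (t : ℝ) : ℝ := t / (1 + t)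

section Damping

variable {t u : ℝ}

lemma damping_nonneg (ht : 0 ≤ t) : 0 ≤ damping t := by
  unfold damping
  positivity

lemma damping_pos (ht : 0 < t) : 0 < damping t := by
  unfold damping
  positivity

lemma damping_le_self (ht : 0 ≤ t) : damping t ≤ t :=
  div_le_self ht (by linarith)

lemma damping_le_one (ht : 0 ≤ t) : damping t ≤ 1 :=
  div_le_one_of_le₀ (by linarith) (by linarith)

lemma damping_le_damping (ht : 0 ≤ t) (htu : t ≤ u) : damping t ≤ damping u := by
  rw [damping, damping, div_le_div_iff₀ (by linarith) (by linarith)]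
  linarith

lemma one_sub_damping (ht : 0 ≤ t) : 1 - damping t = (1 + t)⁻¹ := by
  rw [damping]
  field_simp
  ring

end Damping

lemma le_mul_add_of_sq_le {m m' τ c d : ℝ} (hm : 0 ≤ m) (hτ : 0 ≤ τ) (hd : 0 ≤ d)
    (hcd : c ≤ d ^ 2) (h : m' ^ 2 ≤ c * m ^ 2 + τ ^ 2) : m' ≤ d * m + τ := by
  refine le_of_sq_le_sq ?_ (by positivity)
  calc m' ^ 2 ≤ d ^ 2 * m ^ 2 + τ ^ 2 := h.trans (by gcongr)
    _ ≤ d ^ 2 * m ^ 2 + τ ^ 2 + 2 * (d * m * τ) := le_add_of_nonneg_right (by positivity)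
    _ = (d * m + τ) ^ 2 := by ring

lemma add_damping_div_le {A m m' τ : ℝ} (hA : 0 < A) (hm : 0 ≤ m) (hτ : 0 ≤ τ)
    (h : m' ^ 2 ≤ damping (A * (m + τ)) * m ^ 2 + τ ^ 2) :
    m' + damping (A * (m + τ)) / (2 * A) ≤ m + 2 * τ := by
  have hw : 0 ≤ A * (m + τ) := by positivity
  set e := 1 - damping (A * (m + τ)) with he
  have he₁ : e ≤ 1 := sub_le_self _ (damping_nonneg hw)
  -- `√(1 - e) ≤ 1 - e / 2`
  have hsqrt : m' ≤ (1 - e / 2) * m + τ :=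
    le_mul_add_of_sq_le hm hτ (by linarith) (by nlinarith [sq_nonneg e]) h
  have hdamp : damping (A * (m + τ)) / (2 * A) = e / 2 * (m + τ) := by
    rw [he, one_sub_damping hw, damping]
    field_simp
  rw [hdamp]
  linarith [mul_le_mul_of_nonneg_right he₁ hτ]

lemma mul_add_lt_of_mul_add_lt {A A' m m' τ τ' ρ δ : ℝ} (hA : 0 ≤ A) (hA' : 0 ≤ A') (hm : 0 ≤ m)
    (hτ : 0 ≤ τ) (hρ : 0 < ρ) (hδ : δ ≤ (1 / (2 * ρ)) ^ 2) (hgrow : A' ≤ ρ * A)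
    (hsmall : ρ * (A * τ) + A' * τ' < δ / 2)
    (hrec : m' ^ 2 ≤ damping (A * (m + τ)) * m ^ 2 + τ ^ 2) (hw : A * (m + τ) < δ) :
    A' * (m' + τ') < δ := by
  have hdamp : damping (A * (m + τ)) ≤ (1 / (2 * ρ)) ^ 2 :=
    (damping_le_self (by positivity)).trans (hw.le.trans hδ)
  have hm' : m' ≤ 1 / (2 * ρ) * m + τ := le_mul_add_of_sq_le hm hτ (by positivity) hdamp hrec
  have hAm' : A' * m' ≤ A * m / 2 + ρ * (A * τ) :=
    calc A' * m' ≤ A' * (1 / (2 * ρ) * m + τ) := by gcongr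
      _ ≤ ρ * A * (1 / (2 * ρ) * m + τ) := by gcongr
      _ = A * m / 2 + ρ * (A * τ) := by field_simp
  linarith [mul_nonneg hA hτ]

section OneStep

variable {A m τ : ℕ → ℝ}

lemma summable_damping_div (hA : ∀ k, 0 < A k) (hm : ∀ k, 0 ≤ m k) (hτ : ∀ k, 0 ≤ τ k)
    (hτs : Summable τ)
    (hrec : ∀ k, m (k + 1) ^ 2 ≤ damping (A k * (m k + τ k)) * m k ^ 2 + τ k ^ 2) :
    Summable fun k => damping (A k * (m k + τ k)) / (2 * A k) :=
  summable_of_add_le_add hm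
    (fun k => div_nonneg
      (damping_nonneg (mul_nonneg (hA k).le (add_nonneg (hm k) (hτ k)))) (by linarith [hA k]))
    (fun k => mul_nonneg zero_le_two (hτ k)) (hτs.mul_left 2)
    fun k => add_damping_div_le (hA k) (hm k) (hτ k) (hrec k)

lemma frequently_mul_add_lt (hA : ∀ k, 0 < A k) (hm : ∀ k, 0 ≤ m k) (hτ : ∀ k, 0 ≤ τ k)
    (hτs : Summable τ) (hdiv : ¬ Summable fun k => (A k)⁻¹)
    (hrec : ∀ k, m (k + 1) ^ 2 ≤ damping (A k * (m k + τ k)) * m k ^ 2 + τ k ^ 2)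
    {δ : ℝ} (hδ : 0 < δ) : ∃ᶠ k in atTop, A k * (m k + τ k) < δ := by
  intro hlarge
  have hδ' : 0 < damping δ := damping_pos hδ
  refine hdiv (((summable_damping_div hA hm hτ hτs hrec).mul_left
    (2 / damping δ)).of_norm_bounded_eventually_nat ?_)
  filter_upwards [hlarge] with k hk
  have hAk := hA k
  rw [Real.norm_of_nonneg (inv_nonneg.2 hAk.le)]
  calc (A k)⁻¹ = 2 / damping δ * (damping δ / (2 * A k)) := by field_simp
    _ ≤ 2 / damping δ * (damping (A k * (m k + τ k)) / (2 * A k)) := by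
        gcongr
        exact damping_le_damping hδ.le (not_lt.1 hk)

lemma tendsto_mul_add_zero {ρ : ℝ} (hρ : 0 < ρ) (hA : ∀ k, 0 < A k) (hm : ∀ k, 0 ≤ m k)
    (hτ : ∀ k, 0 ≤ τ k) (hgrow : ∀ᶠ k in atTop, A (k + 1) ≤ ρ * A k)
    (hdiv : ¬ Summable fun k => (A k)⁻¹) (hτs : Summable τ)
    (hAτ : Tendsto (fun k => A k * τ k) atTop (𝓝 0))
    (hrec : ∀ k, m (k + 1) ^ 2 ≤ damping (A k * (m k + τ k)) * m k ^ 2 + τ k ^ 2) :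
    Tendsto (fun k => A k * (m k + τ k)) atTop (𝓝 0) := by
  have herr : Tendsto (fun k => ρ * (A k * τ k) + A (k + 1) * τ (k + 1)) atTop (𝓝 0) := by
    simpa only [mul_zero, add_zero, Function.comp_def] using
      (hAτ.const_mul ρ).add (hAτ.comp (tendsto_add_atTop_nat 1))
  refine tendsto_order.2 ⟨fun l hl => Eventually.of_forall fun k =>
    hl.trans_le (mul_nonneg (hA k).le (add_nonneg (hm k) (hτ k))), fun ε hε => ?_⟩
  set δ := min ε ((1 / (2 * ρ)) ^ 2)
  have hδ : 0 < δ := lt_min hε (by positivity)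
  have hsmall : ∀ᶠ k in atTop, A k * (m k + τ k) < δ := by
    refine eventually_of_frequently_of_imp_succ
      (frequently_mul_add_lt hA hm hτ hτs hdiv hrec hδ) ?_
    filter_upwards [hgrow, herr.eventually_lt_const (half_pos hδ)] with k hk hek
    exact mul_add_lt_of_mul_add_lt (hA k).le (hA (k + 1)).le (hm k) (hτ k) hρ (min_le_right _ _)
      hk hek (hrec k)
  exact hsmall.mono fun k hk => hk.trans_le (min_le_left _ _)

end OneStep

section TwoStep

variable {a b τ : ℕ → ℝ}

lemma le_max_add_of_damping (ha : ∀ n, 0 ≤ a n) (hb : ∀ n, 0 ≤ b n) (hτ : ∀ n, 0 ≤ τ n)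
    (hrec : ∀ n, b (n + 2) ^ 2 ≤ damping (a n * b (n + 1)) * b n ^ 2 + τ n ^ 2) (n : ℕ) :
    b (n + 2) ≤ max (b n) (b (n + 1)) + τ n := by
  have hdamp : damping (a n * b (n + 1)) ≤ 1 ^ 2 := by
    rw [one_pow]
    exact damping_le_one (mul_nonneg (ha n) (hb _))
  have := le_mul_add_of_sq_le (hb n) (hτ n) zero_le_one hdamp (hrec n)
  linarith [le_max_left (b n) (b (n + 1))]

lemma max_sq_le_of_damping (ha : ∀ n, 0 ≤ a n) (hmono : Monotone a) (hb : ∀ n, 0 ≤ b n)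
    (hτ : ∀ n, 0 ≤ τ n) (hτa : Antitone τ)
    (hrec : ∀ n, b (n + 2) ^ 2 ≤ damping (a n * b (n + 1)) * b n ^ 2 + τ n ^ 2) (n : ℕ) :
    max (b (n + 2)) (b (n + 3)) ^ 2 ≤
      damping (a (n + 1) * (max (b n) (b (n + 1)) + τ n)) * max (b n) (b (n + 1)) ^ 2 +
        τ n ^ 2 := by
  set M := max (b n) (b (n + 1))
  have hbM : b n ≤ M := le_max_left _ _
  have hbM' : b (n + 1) ≤ M := le_max_right _ _
  have hb₂ : b (n + 2) ≤ M + τ n := le_max_add_of_damping ha hb hτ hrec n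
  have heven : b (n + 2) ^ 2 ≤ damping (a (n + 1) * (M + τ n)) * M ^ 2 + τ n ^ 2 := by
    have hdamp : damping (a n * b (n + 1)) ≤ damping (a (n + 1) * (M + τ n)) :=
      damping_le_damping (mul_nonneg (ha _) (hb _))
        (mul_le_mul (hmono n.le_succ) (by linarith [hτ n]) (hb _) (ha _))
    have hpos := (damping_nonneg (mul_nonneg (ha n) (hb (n + 1)))).trans hdamp
    have := hb n
    exact (hrec n).trans (by gcongr)
  have hodd : b (n + 3) ^ 2 ≤ damping (a (n + 1) * (M + τ n)) * M ^ 2 + τ n ^ 2 := by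
    have hdamp : damping (a (n + 1) * b (n + 2)) ≤ damping (a (n + 1) * (M + τ n)) :=
      damping_le_damping (mul_nonneg (ha _) (hb _)) (mul_le_mul_of_nonneg_left hb₂ (ha _))
    have hpos := (damping_nonneg (mul_nonneg (ha (n + 1)) (hb (n + 2)))).trans hdamp
    have := hb (n + 1)
    have := hτ (n + 1)
    have := hτa n.le_succ
    exact (hrec (n + 1)).trans (by gcongr)
  rcases max_choice (b (n + 2)) (b (n + 3)) with h | h <;> rw [h]
  exacts [heven, hodd]

lemma mul_le_mul_max_add_of_damping (ha : ∀ n, 0 ≤ a n) (hmono : Monotone a) (hb : ∀ n, 0 ≤ b n)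
    (hτ : ∀ n, 0 ≤ τ n)
    (hrec : ∀ n, b (n + 2) ^ 2 ≤ damping (a n * b (n + 1)) * b n ^ 2 + τ n ^ 2) (n : ℕ) :
    a n * b (n + 1) ≤ a (2 * (n / 2) + 1) *
      (max (b (2 * (n / 2))) (b (2 * (n / 2) + 1)) + τ (2 * (n / 2))) := by
  refine mul_le_mul (hmono (by omega)) ?_ (hb _) (ha _)
  rcases Nat.mod_two_eq_zero_or_one n with hn | hn
  · rw [show n + 1 = 2 * (n / 2) + 1 by omega]
    linarith [le_max_right (b (2 * (n / 2))) (b (2 * (n / 2) + 1)), hτ (2 * (n / 2))]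
  · rw [show n + 1 = 2 * (n / 2) + 2 by omega]
    exact le_max_add_of_damping ha hb hτ hrec _

lemma tendsto_mul_zero_of_damping {R : ℝ} (hR : 0 < R) (ha : ∀ n, 0 < a n) (hmono : Monotone a)
    (hgrow : ∀ᶠ n in atTop, a (n + 1) ≤ R * a n) (hdiv : ¬ Summable fun n => (a n)⁻¹)
    (hb : ∀ n, 0 ≤ b n) (hτ : ∀ n, 0 ≤ τ n) (hτa : Antitone τ) (hτs : Summable τ)
    (haτ : Tendsto (fun n => a n * τ n) atTop (𝓝 0))
    (hrec : ∀ n, b (n + 2) ^ 2 ≤ damping (a n * b (n + 1)) * b n ^ 2 + τ n ^ 2) :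
    Tendsto (fun n => a n * b (n + 1)) atTop (𝓝 0) := by
  have htwo : Tendsto (fun k : ℕ => 2 * k) atTop atTop := tendsto_id.const_mul_atTop' two_pos
  have hgrow_even := htwo.eventually hgrow
  have hgrow_odd := ((tendsto_add_atTop_nat 1).comp htwo).eventually hgrow
  have haτ_pair : Tendsto (fun k => a (2 * k + 1) * τ (2 * k)) atTop (𝓝 0) := by
    have hlim := (haτ.comp htwo).const_mul R
    rw [mul_zero] at hlim
    refine squeeze_zero' (Eventually.of_forall fun k => mul_nonneg (ha _).le (hτ _)) ?_ hlim
    filter_upwards [hgrow_even] with k hk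
    rw [Function.comp_apply, ← mul_assoc]
    exact mul_le_mul_of_nonneg_right hk (hτ _)
  have hpair : Tendsto (fun k => a (2 * k + 1) * (max (b (2 * k)) (b (2 * k + 1)) + τ (2 * k)))
      atTop (𝓝 0) := by
    refine tendsto_mul_add_zero (pow_pos hR 2) (fun k => ha _) (fun k => le_max_of_le_left (hb _))
      (fun k => hτ _) ?_ (fun h => hdiv (summable_inv_of_summable_inv_odd ha hmono h))
      (hτs.comp_injective (mul_right_injective₀ two_ne_zero)) haτ_pair
      fun k => max_sq_le_of_damping (fun n => (ha n).le) hmono hb hτ hτa hrec (2 * k)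
    filter_upwards [hgrow_odd, (tendsto_add_atTop_nat 1).eventually hgrow_even] with k hk hk'
    calc a (2 * (k + 1) + 1) ≤ R * a (2 * k + 2) := hk'
      _ ≤ R * (R * a (2 * k + 1)) := by gcongr; exact hk
      _ = R ^ 2 * a (2 * k + 1) := by ring
  exact squeeze_zero (fun n => mul_nonneg (ha _).le (hb _))
    (mul_le_mul_max_add_of_damping (fun n => (ha n).le) hmono hb hτ hrec)
    (hpair.comp (Nat.tendsto_div_const_atTop two_ne_zero))

theorem summable_pow_mul_of_damping {y T : ℕ → ℝ} {R : ℝ} (hR : 1 < R) (ha : ∀ n, 0 < a n)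
    (hmono : Monotone a) (hgrow : ∀ᶠ n in atTop, a (n + 1) ≤ R * a n)
    (hdiv : ¬ Summable fun n => (a n)⁻¹) (hy : ∀ n, 0 ≤ y n) (hT : ∀ n, 0 ≤ T n)
    (hTa : Antitone T) (hTs : Summable fun n => (R ^ 2) ^ n * T n)
    (hrec : ∀ n, y (n + 2) ≤ damping (a n * √(y (n + 1))) * y n + T n) :
    Summable fun n => (R ^ 2) ^ n * y n := by
  have hR₀ : 0 < R := one_pos.trans hR
  have haτ : Tendsto (fun n => a n * √(T n)) atTop (𝓝 0) :=
    ((isBigO_pow_of_eventually_le_mul hR₀ (fun n => (ha n).le) hgrow).mul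
      (Asymptotics.isBigO_refl _ _)).trans_tendsto (tendsto_pow_mul_sqrt_zero hR₀.le hTs)
  have hab : Tendsto (fun n => a n * √(y (n + 1))) atTop (𝓝 0) :=
    tendsto_mul_zero_of_damping (b := fun n => √(y n)) hR₀ ha hmono hgrow hdiv
      (fun n => Real.sqrt_nonneg _) (fun n => Real.sqrt_nonneg _)
      (fun i j hij => Real.sqrt_le_sqrt (hTa hij)) (summable_sqrt_of_summable_pow_mul hR hT hTs)
      haτ fun n => by simpa only [Real.sq_sqrt (hy _), Real.sq_sqrt (hT _)] using hrec n
  have hab₀ : ∀ n, 0 ≤ a n * √(y (n + 1)) := fun n => mul_nonneg (ha n).le (Real.sqrt_nonneg _)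
  exact summable_pow_mul_of_tendsto_zero (by positivity) hy hT hTs
    (squeeze_zero (fun n => damping_nonneg (hab₀ n)) (fun n => damping_le_self (hab₀ n)) hab) hrec

end TwoStep

section Tail

variable {x : ℕ → ℝ}

lemma tail2_nonneg (n : ℕ) : 0 ≤ tail2 x n :=
  tsum_nonneg fun _ => sq_nonneg _

lemma tail2_antitone (hx : Summable fun n => x n ^ 2) : Antitone (tail2 x) := by
  refine antitone_nat_of_succ_le fun n => ?_
  have htail : Summable fun i => x (n + i) ^ 2 := hx.comp_injective (add_right_injective n)
  rw [tail2, tail2, htail.tsum_eq_zero_add]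
  simp only [add_assoc, add_comm 1]
  exact le_add_of_nonneg_left (sq_nonneg _)

lemma summable_pow_mul_tail2 {q : ℝ} (hq : 1 < q) (hx : Summable fun n => q ^ n * x n ^ 2) :
    Summable fun n => q ^ n * tail2 x n :=
  summable_pow_mul_tsum_add (f := fun n => x n ^ 2) hq (fun _ => sq_nonneg _) hx

end Tail

section BoundSeq

variable {Φ : ℝ} {g x : ℕ → ℝ}

lemma phiNorm_nonneg (φ : ℕ → ℝ) : 0 ≤ phiNorm φ :=
  Real.iSup_nonneg fun _ => abs_nonneg _

lemma boundSeq_nonneg (hΦ : 0 ≤ Φ) (hg : ∀ n, 0 ≤ g (n + 3)) : ∀ n, 0 ≤ boundSeq Φ g x n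
  | 0 => by rw [boundSeq]
  | 1 => by rw [boundSeq]; exact mul_nonneg zero_le_two (tail2_nonneg 1)
  | 2 => by rw [boundSeq]; exact mul_nonneg zero_le_two (tail2_nonneg 1)
  | n + 3 => by
    rw [boundSeq]
    have hgn := hg n
    exact add_nonneg
      (mul_nonneg (damping_nonneg (by positivity)) (boundSeq_nonneg hΦ hg (n + 1)))
      (tail2_nonneg _)

lemma boundSeq_add_three_le {c : ℝ} (hΦ : 0 ≤ Φ) (hc : Φ / 2 ≤ c) (hg : ∀ n, 0 ≤ g (n + 3))
    (n : ℕ) :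
    boundSeq Φ g x (n + 3) ≤
      damping (c * g (n + 3) * √(boundSeq Φ g x (n + 2))) * boundSeq Φ g x (n + 1) +
        tail2 x (n + 3) := by
  have hgn := hg n
  have harg : g (n + 3) * Φ * √(boundSeq Φ g x (n + 2)) / 2 ≤
      c * g (n + 3) * √(boundSeq Φ g x (n + 2)) :=
    calc g (n + 3) * Φ * √(boundSeq Φ g x (n + 2)) / 2
        = Φ / 2 * g (n + 3) * √(boundSeq Φ g x (n + 2)) := by ring
      _ ≤ c * g (n + 3) * √(boundSeq Φ g x (n + 2)) := by gcongr
  have hdamp : Cfun Φ g (n + 3) √(boundSeq Φ g x (n + 2)) ≤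
      damping (c * g (n + 3) * √(boundSeq Φ g x (n + 2))) :=
    damping_le_damping (by positivity) harg
  rw [boundSeq]
  gcongr
  exact boundSeq_nonneg hΦ hg _

end BoundSeq

section Weights

lemma summable_pow_mul_nat_add_iff {q : ℝ} (hq : q ≠ 0) (f : ℕ → ℝ) (k : ℕ) :
    (Summable fun n => q ^ n * f (n + k)) ↔ Summable fun n => q ^ n * f n := by
  rw [← summable_nat_add_iff (f := fun n => q ^ n * f n) k,
    ← summable_mul_left_iff (pow_ne_zero k hq)]
  simp only [pow_add, mul_left_comm, mul_assoc]

lemma summable_two_rpow_mul_iff (s : ℝ) (f : ℕ → ℝ) :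
    (Summable fun n : ℕ => (2 : ℝ) ^ (2 * s * ((n : ℝ) + 1)) * f (n + 1)) ↔
      Summable fun n => (((2 : ℝ) ^ s) ^ 2) ^ n * f n := by
  rw [← summable_nat_add_iff (f := fun n => (((2 : ℝ) ^ s) ^ 2) ^ n * f n) 1]
  refine summable_congr fun n => ?_
  rw [← Real.rpow_mul_natCast zero_le_two, ← Real.rpow_mul_natCast zero_le_two]
  push_cast
  rw [mul_comm s 2]

lemma eventually_succ_le_two_rpow_mul {s : ℝ} {g : ℕ → ℝ}
    (h : ∃ N : ℕ, ∀ n m : ℕ, N ≤ n → n ≤ m →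
      g m * (2 : ℝ) ^ (-s * (m : ℝ)) ≤ g n * (2 : ℝ) ^ (-s * (n : ℝ))) :
    ∀ᶠ n in atTop, g (n + 1) ≤ 2 ^ s * g n := by
  obtain ⟨N, hN⟩ := h
  filter_upwards [eventually_ge_atTop N] with n hn
  have hsplit : (2 : ℝ) ^ (-s * (n : ℝ)) = 2 ^ s * 2 ^ (-s * ((n + 1 : ℕ) : ℝ)) := by
    rw [← Real.rpow_add two_pos]
    push_cast
    ring_nf
  have hle := hN n (n + 1) hn n.le_succ
  rw [hsplit, mul_left_comm, ← mul_assoc] at hle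
  exact le_of_mul_le_mul_right hle (by positivity)

end Weights

/-- Lemma 3.5: `∑_{n≥1} 2^{2sn} yₙ < ∞` for the bounding sequence `y` of `x ∈ Hˢ`. -/
theorem boundSeq_summable
    (β : ℝ) (hβ : 0 < β) (φ g : ℕ → ℝ)
    (hφbdd : BddAbove (Set.range fun n : ℕ => |φ (n + 1)|))
    (hgpos : ∀ n : ℕ, 1 ≤ n → 0 < g n)
    (s : ℝ) (hs : 0 < s) (x : ℕ → ℝ) (hx : MemHs s x)
    (hgmono : ∀ n m : ℕ, 1 ≤ n → n ≤ m → g n ≤ g m)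
    (hgs : ∃ N : ℕ, ∀ n m : ℕ, N ≤ n → n ≤ m →
      g m * (2 : ℝ) ^ (-s * (m : ℝ)) ≤ g n * (2 : ℝ) ^ (-s * (n : ℝ)))
    (hgdiv : ¬ Summable fun n : ℕ => (g (n + 1))⁻¹) :
    Summable (fun n : ℕ =>
      (2 : ℝ) ^ (2 * s * ((n : ℝ) + 1)) * boundSeq (phiNorm φ) g x (n + 1)) := by
  have hR : (1 : ℝ) < 2 ^ s := Real.one_lt_rpow one_lt_two hs
  have hq : (1 : ℝ) < (2 ^ s) ^ 2 := one_lt_pow₀ hR two_ne_zero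
  have hx' := (summable_two_rpow_mul_iff s fun n => x n ^ 2).1 hx
  have hxs := summable_of_summable_pow_mul hq.le (fun n => sq_nonneg (x n)) hx'
  have hΦ := phiNorm_nonneg φ
  have hg : ∀ n, 0 < g (n + 3) := fun n => hgpos _ (by omega)
  -- `damping` is monotone, so `phiNorm φ`, which may vanish, can be enlarged to `phiNorm φ + 1`.
  obtain ⟨c, hc, hc₀⟩ : ∃ c, phiNorm φ / 2 ≤ c ∧ 0 < c :=
    ⟨(phiNorm φ + 1) / 2, by linarith, by positivity⟩
  have hgrow : ∀ᶠ n in atTop, c * g (n + 1 + 3) ≤ 2 ^ s * (c * g (n + 3)) := by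
    filter_upwards [(tendsto_add_atTop_nat 3).eventually (eventually_succ_le_two_rpow_mul hgs)]
      with n hn
    rw [mul_left_comm]
    exact mul_le_mul_of_nonneg_left (by rwa [add_right_comm]) hc₀.le
  have hdiv : ¬ Summable fun n => (c * g (n + 3))⁻¹ := by
    simp only [mul_inv]
    rwa [summable_mul_left_iff (inv_ne_zero hc₀.ne'),
      summable_nat_add_iff (f := fun n => (g (n + 1))⁻¹) 2]
  rw [summable_two_rpow_mul_iff, ← summable_pow_mul_nat_add_iff (by positivity) _ 1]
  exact summable_pow_mul_of_damping hR (fun n => mul_pos hc₀ (hg n))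
    (fun i j hij => mul_le_mul_of_nonneg_left (hgmono _ _ (by omega) (by omega)) hc₀.le) hgrow hdiv
    (fun n => boundSeq_nonneg hΦ (fun n => (hg n).le) _) (fun n => tail2_nonneg (n + 3))
    (fun i j hij => tail2_antitone hxs (Nat.add_le_add_right hij 3))
    ((summable_pow_mul_nat_add_iff (by positivity) _ 3).2 (summable_pow_mul_tail2 hq hx'))
    (boundSeq_add_three_le hΦ hc fun n => (hg n).le)
end
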